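/- Let S be any semiring whose underlying type has exactly two elements. Then for all x, y, z, t ∈ S the following ten identities hold: x²y = xy; xy² = xy; xyzt = xzyt; (xy)² = xy; x + yz = x + yz + 2xz; x + yz = x + yz + 2yx; x + yz = x + yz + 2x²; x + yz = x + yz + 2xyz; x + yz = x + yz + 2yzx; and x + y = x + 3y. -/

import Mathlib

/-!
A bijection with `Bool` transports a two-element semiring to `Bool`, where an addition is one of 8
symmetric operation tables and a multiplication one of 16. The identities hold for each of those
128 pairs of tables that satisfies associativity and distributivity; `bool_tables` checks this by
kernel evaluation, and the identities are then pulled back along the bijection.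
-/

/-- A semiring in the sense of the paper: an additive commutative semigroup and a
multiplicative semigroup satisfying both distributive laws; no additive or
multiplicative identity is assumed. -/
class SRng (S : Type*) extends AddCommSemigroup S, Semigroup S where
  left_distrib : ∀ a b c : S, a * (b + c) = a * b + a * c
  right_distrib : ∀ a b c : S, (a + b) * c = a * c + b * c

/-- The binary operation on `Bool` whose values at `(false, false)`, `(false, true)`,
`(true, false)`, `(true, true)` are `a`, `b`, `c`, `d`. -/
def boolOp (a b c d x y : Bool) : Bool :=
  cond x (cond y d c) (cond y b a)

theorem eq_boolOp (f : Bool → Bool → Bool) :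
    f = boolOp (f false false) (f false true) (f true false) (f true true) := by
  funext x y
  cases x <;> cases y <;> rfl

/-- The identities, for operations `p` (addition) and `m` (multiplication) on a type. -/
def SemiringIdentities {A : Type*} (p m : A → A → A) : Prop :=
  ∀ x y z t : A,
    m (m x x) y = m x y ∧
    m x (m y y) = m x y ∧
    m (m (m x y) z) t = m (m (m x z) y) t ∧
    m (m x y) (m x y) = m x y ∧
    p x (m y z) = p (p x (m y z)) (p (m x z) (m x z)) ∧
    p x (m y z) = p (p x (m y z)) (p (m y x) (m y x)) ∧
    p x (m y z) = p (p x (m y z)) (p (m x x) (m x x)) ∧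
    p x (m y z) = p (p x (m y z)) (p (m (m x y) z) (m (m x y) z)) ∧
    p x (m y z) = p (p x (m y z)) (p (m (m y z) x) (m (m y z) x)) ∧
    p x y = p x (p (p y y) y)

instance (p m : Bool → Bool → Bool) : Decidable (SemiringIdentities p m) := by
  unfold SemiringIdentities
  infer_instance

set_option maxRecDepth 100000 in
set_option maxHeartbeats 4000000 in
theorem bool_tables : ∀ a b d : Bool,
    (∀ x y z, boolOp a b b d (boolOp a b b d x y) z = boolOp a b b d x (boolOp a b b d y z)) →
    ∀ k l m n : Bool,
    (∀ x y z, boolOp k l m n (boolOp k l m n x y) z = boolOp k l m n x (boolOp k l m n y z)) →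
    (∀ x y z, boolOp k l m n x (boolOp a b b d y z) =
      boolOp a b b d (boolOp k l m n x y) (boolOp k l m n x z)) →
    (∀ x y z, boolOp k l m n (boolOp a b b d x y) z =
      boolOp a b b d (boolOp k l m n x z) (boolOp k l m n y z)) →
    SemiringIdentities (boolOp a b b d) (boolOp k l m n) := by
  decide +kernel

theorem bool_identities (p m : Bool → Bool → Bool)
    (hc : ∀ x y, p x y = p y x)
    (hp : ∀ x y z, p (p x y) z = p x (p y z))
    (hm : ∀ x y z, m (m x y) z = m x (m y z))
    (hl : ∀ x y z, m x (p y z) = p (m x y) (m x z))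
    (hr : ∀ x y z, m (p x y) z = p (m x z) (m y z)) :
    SemiringIdentities p m := by
  have ep := eq_boolOp p
  rw [hc true false] at ep
  have em := eq_boolOp m
  generalize p false false = a, p false true = b, p true true = d at ep
  generalize m false false = k, m false true = l, m true false = u, m true true = v at em
  subst ep em
  exact bool_tables a b d hp k l u v hm hl hr

theorem two_element_semiring_identities (S : Type*) [SRng S] (hcard : Nat.card S = 2) :
    ∀ x y z t : S,
      x * x * y = x * y ∧
      x * (y * y) = x * y ∧
      x * y * z * t = x * z * y * t ∧
      (x * y) * (x * y) = x * y ∧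
      x + y * z = x + y * z + (x * z + x * z) ∧
      x + y * z = x + y * z + (y * x + y * x) ∧
      x + y * z = x + y * z + (x * x + x * x) ∧
      x + y * z = x + y * z + (x * y * z + x * y * z) ∧
      x + y * z = x + y * z + (y * z * x + y * z * x) ∧
      x + y = x + (y + y + y) := by
  obtain ⟨e⟩ : Nonempty (S ≃ Bool) := by
    have : Finite S := Nat.finite_of_card_ne_zero (by omega)
    exact (Finite.card_eq (α := S) (β := Bool)).mp (by simp [hcard])
  have key := bool_identities
    (fun x y => e (e.symm x + e.symm y)) (fun x y => e (e.symm x * e.symm y))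
    (fun x y => by simp only [add_comm])
    (fun x y z => by simp only [Equiv.symm_apply_apply, add_assoc])
    (fun x y z => by simp only [Equiv.symm_apply_apply, mul_assoc])
    (fun x y z => by simp only [Equiv.symm_apply_apply, SRng.left_distrib])
    (fun x y z => by simp only [Equiv.symm_apply_apply, SRng.right_distrib])
  intro x y z t
  simpa only [Equiv.symm_apply_apply, e.apply_eq_iff_eq] using key (e x) (e y) (e z) (e t)
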